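/- arXiv:1507.04999 — 2 statements merged into one kernel-verified Lean document; each statement's English description precedes it below -/
import Mathlib

section
/- Assume n ≥ 2 and let λ ∈ K. The left D-module D/D(E−λ) is torsion-free over A: if m ∈ D and there exists N ∈ ℕ such that x_0^{b_0}∘⋯∘x_n^{b_n}∘m ∈ D(E−λ) for every (b_0,…,b_n) ∈ ℕ^{n+1} with Σ_i b_i d_i ≥ N, then m ∈ D(E−λ). -/
/-!
Context: `K` is a field of characteristic zero, `n ≥ 0`, and `d 0, …, d n` are
positive integers.  `A = K[x_0, …, x_n]` is the polynomial ring, graded with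
`x i` of weighted degree `d i`.  Inside `End_K(A)` we have the multiplication
operators `x i`, the partial derivatives `∂ i`, the Weyl algebra `D` generated
by them, and the Euler field `E = Σ_i d_i x_i ∂_i`.
-/

open MvPolynomial Finset

set_option synthInstance.maxHeartbeats 1000000
set_option maxHeartbeats 2000000

noncomputable section

variable (K : Type) [Field K] [CharZero K] (n : ℕ)

/-- The polynomial ring `A = K[x_0, …, x_n]`. -/
abbrev Amb := MvPolynomial (Fin (n+1)) K

/-- The operator of multiplication by `x_i` on `A`. -/
def xOp (i : Fin (n+1)) : Module.End K (Amb K n) := LinearMap.mulLeft K (X i)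

/-- The partial derivative `∂/∂x_i` on `A`. -/
def dOp (i : Fin (n+1)) : Module.End K (Amb K n) := (pderiv i).toLinearMap

/-- The Weyl algebra `D`: the `K`-subalgebra of `End_K(A)` generated by
`x_0, …, x_n, ∂_0, …, ∂_n`. -/
def Weyl : Subalgebra K (Module.End K (Amb K n)) :=
  Algebra.adjoin K (Set.range (xOp K n) ∪ Set.range (dOp K n))

variable (d : Fin (n+1) → ℕ)

/-- The Euler field `E = Σ_i d_i x_i ∂_i`, as an endomorphism of `A`. -/
def euler : Module.End K (Amb K n) := ∑ i, (d i : K) • (xOp K n i * dOp K n i)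

lemma xOp_mem (i : Fin (n+1)) : xOp K n i ∈ Weyl K n :=
  Algebra.subset_adjoin (Or.inl ⟨i, rfl⟩)

lemma dOp_mem (i : Fin (n+1)) : dOp K n i ∈ Weyl K n :=
  Algebra.subset_adjoin (Or.inr ⟨i, rfl⟩)

lemma euler_mem : euler K n d ∈ Weyl K n :=
  Subalgebra.sum_mem _ fun i _ => Subalgebra.smul_mem _
    (Subalgebra.mul_mem _ (xOp_mem K n i) (dOp_mem K n i)) _

/-- `x_i` as an element of the Weyl algebra. -/
def xElt (i : Fin (n+1)) : Weyl K n := ⟨xOp K n i, xOp_mem K n i⟩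

/-- `∂_i` as an element of the Weyl algebra. -/
def dElt (i : Fin (n+1)) : Weyl K n := ⟨dOp K n i, dOp_mem K n i⟩

/-- The Euler field as an element of the Weyl algebra. -/
def eulerElt : Weyl K n := ⟨euler K n d, euler_mem K n d⟩

/-!
`E - λ` multiplies the monomial `x^a` by `wt(a) - λ`. Hence if `p • m = w (E - λ)` with `p` prime
in `A`, then `p` divides `w (x^a)` as soon as `wt(a) ≠ λ`. At least one of any two variables, say
`x_j`, is not divisible by `p`, and `p ∣ w (x_j^k g)` for all `g` once `k d_j > λ`. Commutation with
`x_j^k` lowers the order of a differential operator, so induction on the order gives `p ∣ w g` for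
all `g`. Writing `w = Σ_b f_b ∂^b` and evaluating at monomials, one finds `p ∣ f_b` for all `b`,
so `w = p • v` with `v ∈ D`, and cancelling `p` gives `m = v (E - λ)`. Induction on the number of
prime factors extends this from `p` to every nonzero polynomial.
-/

section AdNilpotent

open LieAlgebra

attribute [local instance] LieRing.ofAssociativeRing

section Ring

variable {S R : Type*} [CommRing S] [Ring R] [Algebra S R]

lemma ad_apply_mul (a u v : R) : ad S R a (u * v) = ad S R a u * v + u * ad S R a v := by
  simp only [ad_apply, Ring.lie_def]
  noncomm_ring

lemma ad_pow_apply_mul_eq_zero {a u v : R} {k l : ℕ} (hu : (ad S R a ^ k) u = 0)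
    (hv : (ad S R a ^ l) v = 0) : (ad S R a ^ (k + l)) (u * v) = 0 := by
  induction hN : k + l generalizing k l u v with
  | zero =>
    obtain rfl : k = 0 := by omega
    obtain rfl : u = 0 := by simpa using hu
    simp
  | succ N ih =>
    rcases k with _ | k
    · obtain rfl : u = 0 := by simpa using hu
      simp
    rcases l with _ | l
    · obtain rfl : v = 0 := by simpa using hv
      simp
    rw [pow_succ, Module.End.mul_apply] at hu hv ⊢
    rw [ad_apply_mul, map_add, ih hu (l := l + 1) (by rwa [pow_succ]) (by omega),
      ih (k := k + 1) (by rwa [pow_succ]) hv (by omega), add_zero]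

variable (S) in
/-- The subalgebra of elements on which `ad a = ⁅a, ·⁆` acts locally nilpotently. For `a` the
multiplication by a polynomial, differential operators belong to it, because each commutator
lowers the order. -/
def adNilpotentSubalgebra (a : R) : Subalgebra S R :=
  ((ad S R a).maxGenEigenspace 0).toSubalgebra
    ((Module.End.mem_maxGenEigenspace _ _ _).2 ⟨1, by simp [Ring.lie_def]⟩)
    (fun u v hu hv => by
      simp only [Module.End.mem_maxGenEigenspace, zero_smul, sub_zero] at hu hv ⊢
      obtain ⟨k, hk⟩ := hu
      obtain ⟨l, hl⟩ := hv
      exact ⟨k + l, ad_pow_apply_mul_eq_zero hk hl⟩)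

lemma mem_adNilpotentSubalgebra {a u : R} :
    u ∈ adNilpotentSubalgebra S a ↔ ∃ k, (ad S R a ^ k) u = 0 := by
  simp [adNilpotentSubalgebra]

end Ring

variable {S A : Type*} [CommRing S] [CommRing A] [Algebra S A]

lemma ad_mulLeft_apply (q g : A) (w : Module.End S A) :
    ad S (Module.End S A) (LinearMap.mulLeft S q) w g = q * w g - w (q * g) := rfl

lemma mulLeft_mem_adNilpotentSubalgebra (q f : A) :
    LinearMap.mulLeft S f ∈ adNilpotentSubalgebra S (LinearMap.mulLeft S q) := by
  refine mem_adNilpotentSubalgebra.2 ⟨1, LinearMap.ext fun g => ?_⟩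
  rw [pow_one, ad_mulLeft_apply]
  exact sub_eq_zero.2 (mul_left_comm q f g)

lemma derivation_mem_adNilpotentSubalgebra (q : A) (δ : Derivation S A A) :
    δ.toLinearMap ∈ adNilpotentSubalgebra S (LinearMap.mulLeft S q) := by
  refine mem_adNilpotentSubalgebra.2 ⟨2, LinearMap.ext fun g => ?_⟩
  rw [pow_two, Module.End.mul_apply]
  simp only [ad_mulLeft_apply, Derivation.coeFn_coe, Derivation.leibniz, smul_eq_mul,
    LinearMap.zero_apply]
  ring

lemma dvd_apply_of_forall_dvd_apply_mul_of_prime {p q : A} (hp : Prime p) (hpq : ¬ p ∣ q)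
    {w : Module.End S A} (hw : w ∈ adNilpotentSubalgebra S (LinearMap.mulLeft S q))
    (h : ∀ g, p ∣ w (q * g)) (g : A) : p ∣ w g := by
  obtain ⟨k, hk⟩ := mem_adNilpotentSubalgebra.1 hw
  clear hw
  induction k generalizing w with
  | zero =>
    obtain rfl : w = 0 := by simpa using hk
    simp
  | succ k ih =>
    have h_ad : p ∣ q * w g - w (q * g) :=
      ih (w := ad S _ (LinearMap.mulLeft S q) w)
        (fun g => dvd_sub ((h g).mul_left q) (h (q * g)))
        (by rwa [pow_succ, Module.End.mul_apply] at hk)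
    exact (hp.dvd_or_dvd ((dvd_sub_left (h g)).1 h_ad)).resolve_left hpq

end AdNilpotent

lemma dvd_apply_of_forall_dvd_apply_monomial_one {σ R : Type*} [CommSemiring R]
    {p : MvPolynomial σ R} {u : Module.End R (MvPolynomial σ R)} (h : ∀ a, p ∣ u (monomial a 1))
    (g : MvPolynomial σ R) : p ∣ u g := by
  rw [g.as_sum, map_sum]
  refine Finset.dvd_sum fun a _ => ?_
  rw [← mul_one (coeff a g), ← smul_eq_mul, ← smul_monomial, map_smul, smul_eq_C_mul]
  exact (h a).mul_left _

lemma not_dvd_X_or_not_dvd_X {σ R : Type*} [CommRing R] [IsDomain R]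
    {p : MvPolynomial σ R} (hp : Prime p) {i j : σ} (hij : i ≠ j) : ¬ p ∣ X i ∨ ¬ p ∣ X j := by
  by_contra! ⟨hi, hj⟩
  have hdvd : (X i : MvPolynomial σ R) ∣ X j :=
    ((hp.dvd_prime_iff_associated X_prime).1 hi).symm.dvd.trans hj
  exact hij (X_dvd_X.1 hdvd)

lemma exists_forall_le_natCast_ne {R : Type*} [AddMonoidWithOne R] [CharZero R] (t : R) :
    ∃ N : ℕ, ∀ s, N ≤ s → (s : R) ≠ t := by
  by_cases ht : ∃ s : ℕ, (s : R) = t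
  · obtain ⟨s, rfl⟩ := ht
    exact ⟨s + 1, fun r hr => Nat.cast_injective.ne (by omega)⟩
  · exact ⟨0, fun s _ hs => ht ⟨s, hs⟩⟩

section IteratedPDeriv

variable {σ : Type*}

section CommSemiring

variable {R : Type*} [CommSemiring R]

variable (R) in
/-- The iterated partial derivative `∂^b`. Defining it by its values on monomials makes it
available for a multi-index without ordering the variables. -/
def iteratedPDeriv (b : σ →₀ ℕ) : Module.End R (MvPolynomial σ R) :=
  (basisMonomials σ R).constr R
    fun a => monomial (a - b) (b.prod fun j k => ((a j).descFactorial k : R))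

lemma iteratedPDeriv_monomial_one (b a : σ →₀ ℕ) :
    iteratedPDeriv R b (monomial a 1) =
      monomial (a - b) (b.prod fun j k => ((a j).descFactorial k : R)) := by
  simpa only [iteratedPDeriv, coe_basisMonomials] using (basisMonomials σ R).constr_basis R _ a

lemma iteratedPDeriv_zero : iteratedPDeriv R (0 : σ →₀ ℕ) = 1 :=
  (basisMonomials σ R).ext fun a => by simp [iteratedPDeriv_monomial_one]

lemma iteratedPDeriv_monomial_one_of_not_le {b a : σ →₀ ℕ} (h : ¬ b ≤ a) :
    iteratedPDeriv R b (monomial a 1) = 0 := by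
  obtain ⟨j, hj⟩ : ∃ j, a j < b j := by simpa [Finsupp.le_def] using h
  have hjb : j ∈ b.support := Finsupp.mem_support_iff.2 (by omega)
  rw [iteratedPDeriv_monomial_one, Finsupp.prod,
    Finset.prod_eq_zero hjb (by rw [Nat.descFactorial_of_lt hj, Nat.cast_zero]), map_zero]

lemma iteratedPDeriv_monomial_one_self (a : σ →₀ ℕ) :
    iteratedPDeriv R a (monomial a 1) = C (a.prod fun _ k => (k.factorial : R)) := by
  simp only [iteratedPDeriv_monomial_one, tsub_self, Finsupp.prod, Nat.descFactorial_self,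
    C_apply]

lemma pderiv_comp_iteratedPDeriv (i : σ) (b : σ →₀ ℕ) :
    (pderiv i).toLinearMap ∘ₗ iteratedPDeriv R b = iteratedPDeriv R (b + Finsupp.single i 1) := by
  classical
  refine (basisMonomials σ R).ext fun a => ?_
  have hprod (c : σ →₀ ℕ) : (c.prod fun j k => ((a j).descFactorial k : R)) =
      (a i).descFactorial (c i) * (c.erase i).prod fun j k => ((a j).descFactorial k : R) :=
    (Finsupp.mul_prod_erase' c i _ (by simp)).symm
  have herase : (b + Finsupp.single i 1).erase i = b.erase i := by
    simp [Finsupp.erase_add]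
  rw [coe_basisMonomials, LinearMap.comp_apply, Derivation.coeFn_coe,
    iteratedPDeriv_monomial_one, iteratedPDeriv_monomial_one, pderiv_monomial, tsub_tsub, hprod b,
    hprod (b + Finsupp.single i 1), herase]
  congr 1
  simp only [Finsupp.coe_add, Finsupp.coe_tsub, Pi.add_apply, Pi.sub_apply, Finsupp.single_eq_same,
    Nat.descFactorial_succ, Nat.cast_mul]
  ring

end CommSemiring

lemma dvd_of_forall_dvd_linearCombination_iteratedPDeriv {F : Type*} [Field F] [CharZero F]
    {p : MvPolynomial σ F} {f : (σ →₀ ℕ) →₀ MvPolynomial σ F}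
    (h : ∀ a, p ∣ Finsupp.linearCombination _ (iteratedPDeriv F) f (monomial a 1))
    (a : σ →₀ ℕ) : p ∣ f a := by
  classical
  induction a using WellFoundedLT.induction with
  | ind a ih =>
    by_cases ha : a ∈ f.support
    swap
    · simp [Finsupp.notMem_support_iff.1 ha]
    have hsum := h a
    rw [Finsupp.linearCombination_apply, Finsupp.sum, LinearMap.sum_apply,
      ← Finset.add_sum_erase _ _ ha] at hsum
    have hrest : p ∣ ∑ b ∈ f.support.erase a, (f b • iteratedPDeriv F b) (monomial a 1) := by
      refine Finset.dvd_sum fun b hb => ?_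
      by_cases hba : b ≤ a
      · exact (ih b (lt_of_le_of_ne hba (Finset.ne_of_mem_erase hb))).mul_right _
      · simp [iteratedPDeriv_monomial_one_of_not_le hba]
    have hlead : p ∣ f a * C (a.prod fun _ k => (k.factorial : F)) := by
      simpa [iteratedPDeriv_monomial_one_self] using (dvd_add_left hrest).1 hsum
    have hunit : IsUnit (C (σ := σ) (a.prod fun _ k => (k.factorial : F))) :=
      (IsUnit.mk0 _ (Finset.prod_ne_zero_iff.2 fun j _ =>
        Nat.cast_ne_zero.2 (Nat.factorial_ne_zero (a j)))).map C
    exact hunit.dvd_mul_right.1 hlead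

end IteratedPDeriv

section Weyl

variable {n d}

section Field

variable {F : Type} [Field F]

lemma dOp_mul_iteratedPDeriv (i : Fin (n + 1)) (b : Fin (n + 1) →₀ ℕ) :
    dOp F n i * iteratedPDeriv F b = iteratedPDeriv F (b + Finsupp.single i 1) :=
  pderiv_comp_iteratedPDeriv i b

lemma dOp_mul_smul (i : Fin (n + 1)) (f : Amb F n) (u : Module.End F (Amb F n)) :
    dOp F n i * f • u = f • (dOp F n i * u) + pderiv i f • u := by
  refine LinearMap.ext fun g => ?_
  simp only [dOp, Module.End.mul_apply, LinearMap.smul_apply, LinearMap.add_apply,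
    Derivation.coeFn_coe, smul_eq_mul, Derivation.leibniz]
  ring

lemma dOp_mul_mem_span (i : Fin (n + 1)) {u : Module.End F (Amb F n)}
    (hu : u ∈ Submodule.span (Amb F n) (Set.range (iteratedPDeriv F))) :
    dOp F n i * u ∈ Submodule.span (Amb F n) (Set.range (iteratedPDeriv F)) := by
  induction hu using Submodule.span_induction with
  | mem u hu =>
    obtain ⟨b, rfl⟩ := hu
    rw [dOp_mul_iteratedPDeriv]
    exact Submodule.subset_span ⟨_, rfl⟩
  | zero => simp
  | add u v _ _ hu hv =>
    rw [mul_add]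
    exact add_mem hu hv
  | smul f u hu hdu =>
    rw [dOp_mul_smul]
    exact add_mem (Submodule.smul_mem _ _ hdu) (Submodule.smul_mem _ _ hu)

lemma mem_span_iteratedPDeriv_of_mem_weyl {w : Module.End F (Amb F n)} (hw : w ∈ Weyl F n) :
    w ∈ Submodule.span (Amb F n) (Set.range (iteratedPDeriv F)) := by
  suffices hmul : ∀ u ∈ Submodule.span (Amb F n) (Set.range (iteratedPDeriv F)),
      w * u ∈ Submodule.span (Amb F n) (Set.range (iteratedPDeriv F)) by
    simpa using hmul 1 (Submodule.subset_span ⟨0, iteratedPDeriv_zero⟩)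
  induction hw using Algebra.adjoin_induction with
  | mem w hw =>
    intro u hu
    rcases hw with ⟨i, rfl⟩ | ⟨i, rfl⟩
    · exact Submodule.smul_mem _ (X i : Amb F n) hu
    · exact dOp_mul_mem_span i hu
  | algebraMap c =>
    intro u hu
    rw [← Algebra.smul_def, ← algebraMap_smul (Amb F n)]
    exact Submodule.smul_mem _ _ hu
  | add v w _ _ hv hw =>
    intro u hu
    rw [add_mul]
    exact add_mem (hv u hu) (hw u hu)
  | mul v w _ _ hv hw =>
    intro u hu
    rw [mul_assoc]
    exact hv _ (hw u hu)

lemma weyl_le_adNilpotentSubalgebra (q : Amb F n) :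
    Weyl F n ≤ adNilpotentSubalgebra F (LinearMap.mulLeft F q) := by
  refine Algebra.adjoin_le ?_
  rintro _ (⟨j, rfl⟩ | ⟨j, rfl⟩)
  · exact mulLeft_mem_adNilpotentSubalgebra q (X j)
  · exact derivation_mem_adNilpotentSubalgebra q (pderiv j)

lemma euler_monomial_one (a : Fin (n + 1) →₀ ℕ) :
    euler F n d (monomial a 1) = (Finsupp.weight d a : F) • monomial a 1 := by
  have hhom := isWeightedHomogeneous_monomial (R := F) d a 1 rfl
  simpa [euler, xOp, dOp, Nat.cast_smul_eq_nsmul] using hhom.sum_weight_X_mul_pderiv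

lemma mul_euler_sub_monomial_one (w : Module.End F (Amb F n)) (t : F) (a : Fin (n + 1) →₀ ℕ) :
    (w * (euler F n d - t • 1)) (monomial a 1) =
      ((Finsupp.weight d a : F) - t) • w (monomial a 1) := by
  rw [Module.End.mul_apply, LinearMap.sub_apply, euler_monomial_one, LinearMap.smul_apply,
    Module.End.one_apply, ← sub_smul, map_smul]

lemma dvd_apply_monomial_one_of_weight_ne {p : Amb F n} {m w : Module.End F (Amb F n)} {t : F}
    (h : p • m = w * (euler F n d - t • 1)) {a : Fin (n + 1) →₀ ℕ}
    (ha : (Finsupp.weight d a : F) ≠ t) : p ∣ w (monomial a 1) := by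
  have hval : p * m (monomial a 1) = ((Finsupp.weight d a : F) - t) • w (monomial a 1) := by
    rw [← mul_euler_sub_monomial_one, ← h, LinearMap.smul_apply, smul_eq_mul]
  rw [← inv_smul_smul₀ (sub_ne_zero.2 ha) (w (monomial a 1)), ← hval, ← mul_smul_comm]
  exact dvd_mul_right _ _

end Field

variable {K}

lemma smul_mem_weyl (f : Amb K n) {u : Module.End K (Amb K n)} (hu : u ∈ Weyl K n) :
    f • u ∈ Weyl K n := by
  induction f using MvPolynomial.induction_on generalizing u with
  | C c =>
    rw [← algebraMap_eq, algebraMap_smul]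
    exact Subalgebra.smul_mem _ hu c
  | add p q hp hq =>
    rw [add_smul]
    exact add_mem (hp hu) (hq hu)
  | mul_X p i hp =>
    rw [mul_smul]
    exact hp (mul_mem (xOp_mem K n i) hu)

lemma iteratedPDeriv_mem_weyl (b : Fin (n + 1) →₀ ℕ) : iteratedPDeriv K b ∈ Weyl K n := by
  induction b using Finsupp.induction with
  | zero =>
    rw [iteratedPDeriv_zero]
    exact one_mem _
  | single_add i k c _ _ hc =>
    clear * - hc
    induction k with
    | zero => simpa using hc
    | succ k ih =>
      rw [Finsupp.single_add, add_right_comm, ← dOp_mul_iteratedPDeriv]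
      exact mul_mem (dOp_mem K n i) ih

lemma exists_eq_smul_of_forall_dvd {f : Amb K n} {w : Module.End K (Amb K n)}
    (hw : w ∈ Weyl K n) (h : ∀ g, f ∣ w g) : ∃ v ∈ Weyl K n, w = f • v := by
  obtain ⟨c, rfl⟩ :=
    Finsupp.mem_span_range_iff_exists_finsupp.1 (mem_span_iteratedPDeriv_of_mem_weyl hw)
  choose q hq using dvd_of_forall_dvd_linearCombination_iteratedPDeriv fun a => h (monomial a 1)
  refine ⟨∑ b ∈ c.support, q b • iteratedPDeriv K b,
    sum_mem fun b _ => smul_mem_weyl _ (iteratedPDeriv_mem_weyl b), ?_⟩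
  rw [Finsupp.sum, Finset.smul_sum]
  exact Finset.sum_congr rfl fun b _ => by rw [hq b, mul_smul]

lemma exists_dvd_apply_X_pow_mul {p : Amb K n} {m w : Module.End K (Amb K n)} {t : K}
    (h : p • m = w * (euler K n d - t • 1)) {j : Fin (n + 1)} (hj : 0 < d j) :
    ∃ k : ℕ, ∀ g, p ∣ w (X j ^ k * g) := by
  obtain ⟨N, hN⟩ := exists_forall_le_natCast_ne t
  refine ⟨N, dvd_apply_of_forall_dvd_apply_monomial_one
    (u := w * LinearMap.mulLeft K (X j ^ N)) fun a => ?_⟩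
  have hweight : N ≤ Finsupp.weight d (Finsupp.single j N + a) := by
    rw [map_add, Finsupp.weight_single, smul_eq_mul]
    exact (Nat.le_mul_of_pos_right N hj).trans (Nat.le_add_right _ _)
  rw [Module.End.mul_apply, LinearMap.mulLeft_apply, X_pow_eq_monomial, monomial_mul, one_mul]
  exact dvd_apply_monomial_one_of_weight_ne h (hN _ hweight)

lemma exists_eq_mul_euler_sub_of_prime_smul {p : Amb K n} (hp : Prime p) {i j : Fin (n + 1)}
    (hij : i ≠ j) (hi : 0 < d i) (hj : 0 < d j) {m w : Module.End K (Amb K n)} {t : K}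
    (hw : w ∈ Weyl K n) (h : p • m = w * (euler K n d - t • 1)) :
    ∃ v ∈ Weyl K n, m = v * (euler K n d - t • 1) := by
  obtain ⟨s, hs, hps⟩ : ∃ s, 0 < d s ∧ ¬ p ∣ X s :=
    (not_dvd_X_or_not_dvd_X hp hij).elim (⟨i, hi, ·⟩) (⟨j, hj, ·⟩)
  obtain ⟨k, hk⟩ := exists_dvd_apply_X_pow_mul h hs
  have hdvd : ∀ g, p ∣ w g := dvd_apply_of_forall_dvd_apply_mul_of_prime hp
    (mt hp.dvd_of_dvd_pow hps) (weyl_le_adNilpotentSubalgebra _ hw) hk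
  obtain ⟨v, hv, rfl⟩ := exists_eq_smul_of_forall_dvd hw hdvd
  exact ⟨v, hv, LinearMap.ext fun g => mul_left_cancel₀ hp.ne_zero (LinearMap.congr_fun h g)⟩

lemma coe_prod_xElt_pow_mul (b : Fin (n + 1) → ℕ) (m : Weyl K n) :
    (((List.ofFn fun i => xElt K n i ^ b i).prod * m : Weyl K n) : Module.End K (Amb K n)) =
      (∏ i, X i ^ b i : Amb K n) • (m : Module.End K (Amb K n)) := by
  have hpow (i : Fin (n + 1)) : ((xElt K n i ^ b i : Weyl K n) : Module.End K (Amb K n)) =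
      Algebra.lmul K (Amb K n) (X i ^ b i) := by
    rw [map_pow]
    rfl
  have hprod : ((List.ofFn fun i => xElt K n i ^ b i).prod : Module.End K (Amb K n)) =
      Algebra.lmul K (Amb K n) (∏ i, X i ^ b i) := by
    rw [← List.prod_ofFn, map_list_prod, List.map_ofFn, ← Subalgebra.coe_val, map_list_prod,
      List.map_ofFn]
    exact congrArg (fun u => (List.ofFn u).prod) (funext hpow)
  rw [MulMemClass.coe_mul, hprod]
  rfl

lemma exists_ne_zero_smul_eq_mul_euler_sub {i : Fin (n + 1)} (hi : 0 < d i) {t : K} {m : Weyl K n}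
    (h : ∃ N : ℕ, ∀ b : Fin (n + 1) → ℕ, N ≤ ∑ i, b i * d i →
      ∃ w : Weyl K n,
        (List.ofFn fun i => xElt K n i ^ b i).prod * m = w * (eulerElt K n d - t • 1)) :
    ∃ f : Amb K n, f ≠ 0 ∧
      ∃ w ∈ Weyl K n, f • (m : Module.End K (Amb K n)) = w * (euler K n d - t • 1) := by
  obtain ⟨N, hN⟩ := h
  have hdeg : N ≤ ∑ i, N * d i :=
    (Nat.le_mul_of_pos_right N hi).trans
      (Finset.single_le_sum (f := fun i => N * d i) (fun _ _ => Nat.zero_le _) (mem_univ i))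
  obtain ⟨w, hw⟩ := hN (fun _ => N) hdeg
  exact ⟨∏ i, X i ^ N, Finset.prod_ne_zero_iff.2 fun i _ => pow_ne_zero N (X_ne_zero i),
    w, w.2, (coe_prod_xElt_pow_mul _ m).symm.trans (congrArg Subtype.val hw)⟩

theorem stmt9_general {i j : Fin (n + 1)} (hij : i ≠ j) (hi : 0 < d i) (hj : 0 < d j) {t : K}
    {f : Amb K n} (hf : f ≠ 0) {m : Module.End K (Amb K n)}
    (h : ∃ w ∈ Weyl K n, f • m = w * (euler K n d - t • 1)) :
    ∃ w ∈ Weyl K n, m = w * (euler K n d - t • 1) := by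
  induction f using UniqueFactorizationMonoid.induction_on_prime generalizing m with
  | h₁ => exact absurd rfl hf
  | h₂ f hunit =>
    obtain ⟨u, rfl⟩ := hunit
    obtain ⟨w, hw, h⟩ := h
    refine ⟨(↑u⁻¹ : Amb K n) • w, smul_mem_weyl _ hw, ?_⟩
    rw [smul_mul_assoc, ← h, smul_smul, Units.inv_mul, one_smul]
  | h₃ f p hf₀ hp ih =>
    obtain ⟨w, hw, h⟩ := h
    rw [mul_smul] at h
    exact ih hf₀ (exists_eq_mul_euler_sub_of_prime_smul hp hij hi hj hw h)

end Weyl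

/-- Assume `n ≥ 2` and let `λ ∈ K`.  The left `D`-module `D/D(E−λ)` is
torsion-free over `A`: if `m ∈ D` and there is `N ∈ ℕ` such that
`x_0^{b_0}∘⋯∘x_n^{b_n}∘m ∈ D(E−λ)` for every `(b_0,…,b_n) ∈ ℕ^{n+1}` with
`Σ_i b_i d_i ≥ N`, then `m ∈ D(E−λ)`. -/
theorem stmt9 (hn : 2 ≤ n) (hd : ∀ i, 0 < d i) (t : K) (m : Weyl K n)
    (h : ∃ N : ℕ, ∀ b : Fin (n+1) → ℕ, N ≤ ∑ i, b i * d i →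
        ∃ w : Weyl K n,
          (List.ofFn fun i => xElt K n i ^ b i).prod * m = w * (eulerElt K n d - t • 1)) :
    ∃ w : Weyl K n, m = w * (eulerElt K n d - t • 1) := by
  obtain ⟨f, hf, hfm⟩ := exists_ne_zero_smul_eq_mul_euler_sub (hd 0) h
  have h0 : (0 : Fin (n + 1)) ≠ Fin.last n := Fin.ne_of_val_ne (by simp; omega)
  obtain ⟨v, hv, hmv⟩ := stmt9_general h0 (hd _) (hd _) hf hfm
  exact ⟨⟨v, hv⟩, Subtype.ext hmv⟩

end
end

section
/- Assume n ≥ 1 and let λ ∈ K. Let M be a torsion-free λ-Euler graded D-module with M_0 = 0, and let m = lcm(d_0,…,d_n). Then M_{−mt + k d_i} = 0 for every i ∈ {0,…,n}, every integer t > 0, and every integer k with 0 ≤ k ≤ mt/d_i. In particular, M_{−k d_i} = 0 for every i and every integer k ≥ 0. -/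
/-!
Context: `K` is a field of characteristic zero, `n ≥ 0`, and `d 0, …, d n` are
positive integers.  `A = K[x_0, …, x_n]` is the polynomial ring, graded with
`x i` of weighted degree `d i`.  Inside `End_K(A)` we have the multiplication
operators `x i`, the partial derivatives `∂ i`, the Weyl algebra `D` generated
by them, and the Euler field `E = Σ_i d_i x_i ∂_i`.
-/

open MvPolynomial Finset

set_option synthInstance.maxHeartbeats 1000000
set_option maxHeartbeats 2000000

noncomputable section

variable (K : Type) [Field K] [CharZero K] (n : ℕ)

variable (d : Fin (n+1) → ℕ)

/-!
If `y x = x y + 1` on a module without additive torsion, a vector killed by a power of `x` and by a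
power of `y` is zero. So on each string `k + ℤ d_i` of degrees, the piece in degree `k` vanishes as
soon as it lies between two zero pieces. One such piece is `M_0`. Others are the `M_{-L s}` with
`s ≥ 0` and `L` a common multiple of the `d_i`: each `x_i` has a power taking `M_{-L s}` to
`M_0 = 0`, so torsion-freeness applies. Hence `M_j = 0` for every `j ≤ 0` divisible by some `d_i`,
and all the degrees in question are of this form.
-/

lemma derivation_mul_mulLeft {R A : Type*} [CommSemiring R] [CommSemiring A] [Algebra R A]
    (δ : Derivation R A A) (a : A) :
    (δ : Module.End R A) * LinearMap.mulLeft R a =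
      LinearMap.mulLeft R a * (δ : Module.End R A) + LinearMap.mulLeft R (δ a) := by
  ext p
  simp [mul_comm p]

lemma dElt_mul_xElt (i : Fin (n + 1)) :
    dElt K n i * xElt K n i = xElt K n i * dElt K n i + 1 :=
  Subtype.ext <| by
    simpa [dElt, xElt, dOp, xOp, Module.End.one_eq_id] using derivation_mul_mulLeft (pderiv i) (X i)

lemma map_dElt_mul_map_xElt {B : Type*} [Semiring B] [Algebra K B] (ρ : Weyl K n →ₐ[K] B)
    (i : Fin (n + 1)) :
    ρ (dElt K n i) * ρ (xElt K n i) = ρ (xElt K n i) * ρ (dElt K n i) + 1 := by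
  simpa only [map_mul, map_add, map_one] using congrArg ρ (dElt_mul_xElt K n i)

section HeisenbergRelation

variable {A : Type*} [Semiring A]

lemma pow_succ_mul_of_mul_eq_mul_add_one {x y : A} (h : y * x = x * y + 1) (c : ℕ) :
    y ^ (c + 1) * x = x * y ^ (c + 1) + (c + 1) • y ^ c := by
  induction c with
  | zero => simpa using h
  | succ c ih =>
    calc y ^ (c + 2) * x
        = y * (y ^ (c + 1) * x) := by rw [pow_succ' y (c + 1), mul_assoc]
      _ = (y * x) * y ^ (c + 1) + (c + 1) • y ^ (c + 1) := by
          rw [ih, mul_add, mul_smul_comm, ← pow_succ', mul_assoc]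
      _ = x * y ^ (c + 2) + (c + 2) • y ^ (c + 1) := by
          rw [h, add_mul, one_mul, mul_assoc, ← pow_succ', add_assoc, ← succ_nsmul']

variable {V : Type*} [AddCommMonoid V] [Module A V] {x y : Module.End A V}

lemma pow_succ_apply_apply_of_mul_eq_mul_add_one (h : y * x = x * y + 1) (c : ℕ) (v : V) :
    (y ^ (c + 1)) (x v) = x ((y ^ (c + 1)) v) + (c + 1) • (y ^ c) v :=
  LinearMap.congr_fun (pow_succ_mul_of_mul_eq_mul_add_one h c) v

lemma eq_zero_of_apply_eq_zero_of_pow_apply_eq_zero [IsAddTorsionFree V]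
    (h : y * x = x * y + 1) {v : V} (hx : x v = 0) {b : ℕ} (hy : (y ^ b) v = 0) : v = 0 := by
  induction b with
  | zero => simpa using hy
  | succ b ih =>
    have hsmul : (b + 1) • (y ^ b) v = 0 := by
      simpa [hx, hy] using (pow_succ_apply_apply_of_mul_eq_mul_add_one h b v).symm
    exact ih ((smul_eq_zero.mp hsmul).resolve_left b.succ_ne_zero)

lemma eq_zero_of_pow_apply_eq_zero_of_pow_apply_eq_zero [IsAddTorsionFree V]
    (h : y * x = x * y + 1) {a b : ℕ} {v : V} (hx : (x ^ a) v = 0) (hy : (y ^ b) v = 0) :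
    v = 0 := by
  induction a generalizing v b with
  | zero => simpa using hx
  | succ a ih =>
    have hy_succ : (y ^ (b + 1)) v = 0 := by rw [pow_succ', Module.End.mul_apply, hy, map_zero]
    have hyx : (y ^ (b + 1)) (x v) = 0 := by
      rw [pow_succ_apply_apply_of_mul_eq_mul_add_one h, hy_succ, hy, map_zero, smul_zero, zero_add]
    have hxv : x v = 0 := ih (by rwa [pow_succ, Module.End.mul_apply] at hx) hyx
    exact eq_zero_of_apply_eq_zero_of_pow_apply_eq_zero h hxv hy

end HeisenbergRelation

section GradedPieces

variable {R V : Type*} [Semiring R] [AddCommMonoid V] [Module R V]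

lemma pow_apply_mem_add_nsmul {κ : Type*} [AddMonoid κ] {G : κ → Submodule R V} {e : κ}
    {f : Module.End R V} (hf : ∀ k, ∀ v ∈ G k, f v ∈ G (k + e)) (c : ℕ) {k : κ} {v : V}
    (hv : v ∈ G k) : (f ^ c) v ∈ G (k + c • e) := by
  induction c with
  | zero => simpa using hv
  | succ c ih =>
    rw [pow_succ', Module.End.mul_apply, succ_nsmul, ← add_assoc]
    exact hf _ _ ih

lemma eq_bot_of_add_nsmul_eq_bot_of_sub_nsmul_eq_bot [IsAddTorsionFree V] {κ : Type*} [AddGroup κ]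
    {G : κ → Submodule R V} {e : κ} {x y : Module.End R V} (hyx : y * x = x * y + 1)
    (hx : ∀ k, ∀ v ∈ G k, x v ∈ G (k + e)) (hy : ∀ k, ∀ v ∈ G k, y v ∈ G (k - e))
    {a b : ℕ} {k : κ} (ha : G (k + a • e) = ⊥) (hb : G (k - b • e) = ⊥) : G k = ⊥ := by
  simp only [sub_eq_add_neg, ← neg_nsmul] at hy hb
  refine (Submodule.eq_bot_iff _).mpr fun v hv => ?_
  have hxv : (x ^ a) v = 0 := (Submodule.eq_bot_iff _).mp ha _ (pow_apply_mem_add_nsmul hx a hv)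
  have hyv : (y ^ b) v = 0 := (Submodule.eq_bot_iff _).mp hb _ (pow_apply_mem_add_nsmul hy b hv)
  exact eq_zero_of_pow_apply_eq_zero_of_pow_apply_eq_zero hyx hxv hyv

lemma eq_bot_of_forall_add_nsmul_eq_bot {ι κ : Type*} [AddMonoid κ] {G : κ → Submodule R V}
    {e : ι → κ} {x : ι → Module.End R V} (hx : ∀ i k, ∀ v ∈ G k, x i v ∈ G (k + e i))
    (htf : ∀ v, (∃ c : ℕ, ∀ i, (x i ^ c) v = 0) → v = 0)
    {k : κ} {c : ι → ℕ} {C : ℕ} (hcC : ∀ i, c i ≤ C) (h : ∀ i, G (k + c i • e i) = ⊥) :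
    G k = ⊥ := by
  refine (Submodule.eq_bot_iff _).mpr fun v hv => htf v ⟨C, fun i => ?_⟩
  exact Module.End.pow_map_zero_of_le (hcC i)
    ((Submodule.eq_bot_iff _).mp (h i) _ (pow_apply_mem_add_nsmul (hx i) (c i) hv))

variable {ι : Type*} {G : ℤ → Submodule R V} {d : ι → ℕ} {x y : ι → Module.End R V}

lemma eq_bot_neg_mul_of_forall_dvd (hx : ∀ i k, ∀ v ∈ G k, x i v ∈ G (k + d i))
    (htf : ∀ v, (∃ c : ℕ, ∀ i, (x i ^ c) v = 0) → v = 0) (h0 : G 0 = ⊥)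
    {L : ℕ} (hL : ∀ i, d i ∣ L) (s : ℕ) : G (-(L * s : ℤ)) = ⊥ := by
  refine eq_bot_of_forall_add_nsmul_eq_bot hx htf (c := fun i => L / d i * s)
    (fun i => Nat.mul_le_mul_right s (Nat.div_le_self L (d i))) fun i => ?_
  have hdeg : -(L * s : ℤ) + (L / d i * s) • (d i : ℤ) = 0 := by
    have hmul : ((L / d i : ℕ) : ℤ) * d i = L := mod_cast Nat.div_mul_cancel (hL i)
    rw [nsmul_eq_mul, Nat.cast_mul, ← hmul]
    ring
  rw [hdeg, h0]

lemma eq_bot_of_nonpos_of_dvd [IsAddTorsionFree V] (hyx : ∀ i, y i * x i = x i * y i + 1)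
    (hx : ∀ i k, ∀ v ∈ G k, x i v ∈ G (k + d i))
    (hy : ∀ i k, ∀ v ∈ G k, y i v ∈ G (k - d i))
    (htf : ∀ v, (∃ c : ℕ, ∀ i, (x i ^ c) v = 0) → v = 0) (h0 : G 0 = ⊥)
    {L : ℕ} (hL0 : L ≠ 0) (hL : ∀ i, d i ∣ L) {i : ι} {j : ℤ} (hj : j ≤ 0) (hij : (d i : ℤ) ∣ j) :
    G j = ⊥ := by
  obtain ⟨r, rfl⟩ : ∃ r : ℕ, j = -(d i * r : ℤ) := by
    obtain ⟨p, hp⟩ := Int.natCast_dvd.mp hij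
    exact ⟨p, by rw [← Nat.cast_mul, ← hp, Int.ofNat_natAbs_of_nonpos hj, neg_neg]⟩
  obtain ⟨q, hq⟩ := hL i
  obtain ⟨q, rfl⟩ := Nat.exists_eq_succ_of_ne_zero (right_ne_zero_of_mul (hq ▸ hL0))
  have hupper : -(d i * r : ℤ) + r • (d i : ℤ) = 0 := by
    rw [nsmul_eq_mul]
    ring
  have hlower : -(d i * r : ℤ) - (q * r) • (d i : ℤ) = -(L * r : ℤ) := by
    rw [nsmul_eq_mul, hq]
    push_cast
    ring
  exact eq_bot_of_add_nsmul_eq_bot_of_sub_nsmul_eq_bot (hyx i) (hx i) (hy i)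
    (hupper ▸ h0) (hlower ▸ eq_bot_neg_mul_of_forall_dvd hx htf h0 hL r)

theorem stmt13_general [IsAddTorsionFree V] (hyx : ∀ i, y i * x i = x i * y i + 1)
    (hx : ∀ i k, ∀ v ∈ G k, x i v ∈ G (k + d i))
    (hy : ∀ i k, ∀ v ∈ G k, y i v ∈ G (k - d i))
    (htf : ∀ v, (∃ c : ℕ, ∀ i, (x i ^ c) v = 0) → v = 0) (h0 : G 0 = ⊥)
    {L : ℕ} (hL0 : L ≠ 0) (hL : ∀ i, d i ∣ L) :
    (∀ (i : ι) (s k : ℤ), k * d i ≤ L * s → G (-(L * s) + k * d i) = ⊥) ∧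
      ∀ (i : ι) (k : ℤ), 0 ≤ k → G (-(k * d i)) = ⊥ := by
  have hbot {i : ι} {j : ℤ} : j ≤ 0 → (d i : ℤ) ∣ j → G j = ⊥ :=
    eq_bot_of_nonpos_of_dvd hyx hx hy htf h0 hL0 hL
  refine ⟨fun i s k hk => hbot (i := i) (by linarith) ?_,
    fun i k hk => hbot (neg_nonpos.mpr (by positivity)) (dvd_mul_left _ k).neg_right⟩
  have hLs : (d i : ℤ) ∣ L * s := (Int.natCast_dvd_natCast.mpr (hL i)).mul_right s
  exact hLs.neg_right.add (dvd_mul_left _ k)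

end GradedPieces

/-- Assume `n ≥ 1` and let `λ ∈ K`.  Let `M` be a torsion-free `λ`-Euler
graded `D`-module with `M_0 = 0`, and let `m = lcm(d_0,…,d_n)`.  Then
`M_{−ms + k d_i} = 0` for every `i`, every integer `s > 0` and every integer `k` with
`0 ≤ k ≤ ms/d_i` (i.e. `k·d_i ≤ ms`).  In particular `M_{−k d_i} = 0` for every `i` and
every integer `k ≥ 0`. -/
theorem stmt13 (hn : 1 ≤ n) (hd : ∀ i, 0 < d i) (t : K)
    {M : Type} [AddCommGroup M] [Module K M]
    (ρ : Weyl K n →ₐ[K] Module.End K M)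
    (Mgr : ℤ → Submodule K M)
    (hdirect : DirectSum.IsInternal Mgr)
    (hgx : ∀ (i : Fin (n+1)) (k : ℤ), ∀ m ∈ Mgr k, ρ (xElt K n i) m ∈ Mgr (k + d i))
    (hgd : ∀ (i : Fin (n+1)) (k : ℤ), ∀ m ∈ Mgr k, ρ (dElt K n i) m ∈ Mgr (k - d i))
    (hgE : ∀ (k : ℤ), ∀ m ∈ Mgr k, ρ (eulerElt K n d) m = (t + (k : K)) • m)
    (htf : ∀ m : M, (∃ c : ℕ, ∀ i : Fin (n+1), (ρ (xElt K n i) ^ c) m = 0) → m = 0)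
    (h0 : Mgr 0 = ⊥) :
    (∀ (i : Fin (n+1)) (s : ℤ), 0 < s → ∀ k : ℤ, 0 ≤ k →
        k * d i ≤ ((Finset.univ.lcm d : ℕ) : ℤ) * s →
        Mgr (-(((Finset.univ.lcm d : ℕ) : ℤ) * s) + k * d i) = ⊥) ∧
    (∀ (i : Fin (n+1)) (k : ℤ), 0 ≤ k → Mgr (-(k * d i)) = ⊥) := by
  have : IsAddTorsionFree M := .of_isTorsionFree K M
  have h := stmt13_general (map_dElt_mul_map_xElt K n ρ) hgx hgd htf h0
    (lcm_ne_zero_iff.mpr fun i _ => (hd i).ne') fun i => dvd_lcm (mem_univ i)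
  exact ⟨fun i s _ k _ => h.1 i s k, h.2⟩

end
end
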